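/- Limiting absorption principle, convergence of the kernel (Theorem 4.3 i)): let λ be real with λ ≥ a_1 and λ ∉ {a_1,…,a_n}. Then for all network points (j,x) and (k,x'), K((j,x),(k,x'),λ − iα) converges, as α → 0⁺, to K((j,x),(k,x'),λ), where K(·,·,λ) is defined by the same formulas using the real-λ quantities ξ_k(λ), s_j(λ), w(λ), F_λ^{−,j}. -/

import Mathlib

noncomputable section

/-- `ξ_k(λ)`: for real `λ`, `ξ_k(λ) = √((λ−a_k)/c_k)` if `λ ≥ a_k` and
`ξ_k(λ) = −i·√((a_k−λ)/c_k)` if `λ < a_k`. -/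
def xiR {m : ℕ} (a c : Fin (m + 2) → ℝ) (lam : ℝ) (k : Fin (m + 2)) : ℂ :=
  if a k ≤ lam then (Real.sqrt ((lam - a k) / c k) : ℂ)
  else -Complex.I * (Real.sqrt ((a k - lam) / c k) : ℂ)

/-- The Wronskian `w(λ) = −i·Σ_k c_k·ξ_k(λ)`. -/
def wR {m : ℕ} (a c : Fin (m + 2) → ℝ) (lam : ℝ) : ℂ :=
  -Complex.I * ∑ k, (c k : ℂ) * xiR a c lam k

/-- `s_j(λ) = −(Σ_{l≠j} c_l·ξ_l(λ))/(c_j·ξ_j(λ))`. -/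
def sR {m : ℕ} (a c : Fin (m + 2) → ℝ) (lam : ℝ) (j : Fin (m + 2)) : ℂ :=
  -(∑ l ∈ Finset.univ.erase j, (c l : ℂ) * xiR a c lam l) / ((c j : ℂ) * xiR a c lam j)

/-- `FR a c lam j k x` is the `k`-th component `F_{λ,k}^{−,j}(x)` of the generalized
eigenfunction `F_λ^{−,j}`. -/
def FR {m : ℕ} (a c : Fin (m + 2) → ℝ) (lam : ℝ) (j k : Fin (m + 2)) (x : ℝ) : ℂ :=
  if k = j then
    Complex.cos (xiR a c lam j * x) -
      Complex.I * sR a c lam j * Complex.sin (xiR a c lam j * x)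
  else Complex.exp (-Complex.I * xiR a c lam k * x)

/-- `ξ_k(μ) = √((μ−a_k)/c_k)` for complex `μ`, with the principal square root
(argument in `(−π, π]`). -/
def xiC {m : ℕ} (a c : Fin (m + 2) → ℝ) (μ : ℂ) (k : Fin (m + 2)) : ℂ :=
  ((μ - (a k : ℂ)) / (c k : ℂ)) ^ ((1 : ℂ) / 2)

/-- The Wronskian `w(μ) = −i·Σ_k c_k·ξ_k(μ)` (the `−` branch, for `Im μ < 0`). -/
def wC {m : ℕ} (a c : Fin (m + 2) → ℝ) (μ : ℂ) : ℂ :=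
  -Complex.I * ∑ k, (c k : ℂ) * xiC a c μ k

/-- `s_j(μ) = −(Σ_{l≠j} c_l·ξ_l(μ))/(c_j·ξ_j(μ))`. -/
def sC {m : ℕ} (a c : Fin (m + 2) → ℝ) (μ : ℂ) (j : Fin (m + 2)) : ℂ :=
  -(∑ l ∈ Finset.univ.erase j, (c l : ℂ) * xiC a c μ l) / ((c j : ℂ) * xiC a c μ j)

/-- `FC a c μ j k x` is the `k`-th component `F_{μ,k}^{−,j}(x)` of the generalized
eigenfunction `F_μ^{−,j}` (the `−` branch, for `Im μ < 0`). -/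
def FC {m : ℕ} (a c : Fin (m + 2) → ℝ) (μ : ℂ) (j k : Fin (m + 2)) (x : ℝ) : ℂ :=
  if k = j then
    Complex.cos (xiC a c μ j * x) - Complex.I * sC a c μ j * Complex.sin (xiC a c μ j * x)
  else Complex.exp (-Complex.I * xiC a c μ k * x)

/-- The resolvent kernel `K((j,x),(k,x'),μ)` for `Im μ < 0` (the `−` branch):
`(1/w(μ))·F_{μ,j}^{−,j}(x)·F_{μ,j}^{−,j+1}(x')` if `k = j` and `x' > x`, and
`(1/w(μ))·F_{μ,j}^{−,j+1}(x)·F_{μ,k}^{−,j}(x')` otherwise; indices modulo `n`. -/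
def KC {m : ℕ} (a c : Fin (m + 2) → ℝ) (μ : ℂ) (j : Fin (m + 2)) (x : ℝ)
    (k : Fin (m + 2)) (x' : ℝ) : ℂ :=
  if k = j ∧ x < x' then (1 / wC a c μ) * FC a c μ j j x * FC a c μ (j + 1) j x'
  else (1 / wC a c μ) * FC a c μ (j + 1) j x * FC a c μ j k x'


/-- The resolvent kernel at real `λ`, formed with the real-`λ` quantities
`ξ_k(λ)`, `s_j(λ)`, `w(λ)`, `F_λ^{−,j}`. -/
def KR {m : ℕ} (a c : Fin (m + 2) → ℝ) (lam : ℝ) (j : Fin (m + 2)) (x : ℝ)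
    (k : Fin (m + 2)) (x' : ℝ) : ℂ :=
  if k = j ∧ x < x' then (1 / wR a c lam) * FR a c lam j j x * FR a c lam (j + 1) j x'
  else (1 / wR a c lam) * FR a c lam (j + 1) j x * FR a c lam j k x'

end

/-!
The kernel at `λ` is the boundary value, from the lower half-plane, of the kernel at `μ`, because
this already holds for the square roots: for `Im z < 0`,
`√z = √((|z| + Re z) / 2) - i √((|z| - Re z) / 2)`, and the right-hand side is continuous on all of
`ℂ`. Everything else is an algebraic or entire function of the `ξ_k`, so only denominators matter.
The limiting values `ξ_k(λ)` lie in the closed fourth quadrant, where `Re - Im` is nonnegative and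
vanishes only at `0`. Hence there is no cancellation in `Σ_k c_k ξ_k(λ)`, and `w(λ) ≠ 0` unless `λ`
equals every `a_k`. The other denominator, `c_j ξ_j(λ)` in `s_j`, enters only when `k = j`.
-/

open Filter Topology

/-- The filter of approach to the real point `t` from the open lower half-plane, tangential approach
included; the resolvent kernel is continued to the real axis along it. -/
noncomputable abbrev nhdsBelow (t : ℝ) : Filter ℂ := 𝓝[{z : ℂ | z.im < 0}] (t : ℂ)

theorem tendsto_sub_mul_I_nhdsBelow (t : ℝ) :
    Tendsto (fun α : ℝ => (t : ℂ) - (α : ℂ) * Complex.I) (𝓝[>] 0) (nhdsBelow t) := by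
  have hcont : Continuous fun α : ℝ => (t : ℂ) - (α : ℂ) * Complex.I := by fun_prop
  refine tendsto_nhdsWithin_iff.mpr ⟨?_, ?_⟩
  · simpa using (hcont.tendsto 0).mono_left nhdsWithin_le_nhds
  · filter_upwards [self_mem_nhdsWithin] with α hα
    simpa using hα

theorem tendsto_sub_div_nhdsBelow (t b : ℝ) {d : ℝ} (hd : 0 < d) :
    Tendsto (fun z : ℂ => (z - (b : ℂ)) / (d : ℂ)) (nhdsBelow t) (nhdsBelow ((t - b) / d)) := by
  have hcont : Continuous fun z : ℂ => (z - (b : ℂ)) / (d : ℂ) := by fun_prop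
  refine tendsto_nhdsWithin_iff.mpr ⟨?_, ?_⟩
  · simpa using (hcont.tendsto t).mono_left nhdsWithin_le_nhds
  · filter_upwards [self_mem_nhdsWithin] with z hz
    simpa [Complex.div_ofReal_im] using div_neg_of_neg_of_pos hz hd

theorem sqrt_eq_of_im_neg {z : ℂ} (hz : z.im < 0) :
    z.sqrt = (√((‖z‖ + z.re) / 2) : ℂ) - (√((‖z‖ - z.re) / 2) : ℂ) * Complex.I := by
  apply Complex.ext
  · simp [Complex.sqrt, Complex.cpow_inv_two_re]
  · simp [Complex.sqrt, Complex.cpow_inv_two_im_eq_neg_sqrt hz]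

-- `Real.sqrt` vanishes on negative numbers, so at most one of the two terms of the limit survives.
theorem tendsto_sqrt_nhdsBelow (t : ℝ) :
    Tendsto Complex.sqrt (nhdsBelow t) (𝓝 ((√t : ℂ) - (√(-t) : ℂ) * Complex.I)) := by
  have hcont : Continuous fun z : ℂ =>
      (√((‖z‖ + z.re) / 2) : ℂ) - (√((‖z‖ - z.re) / 2) : ℂ) * Complex.I := by fun_prop
  have hvalue : (√((‖(t : ℂ)‖ + (t : ℂ).re) / 2) : ℂ)
      - (√((‖(t : ℂ)‖ - (t : ℂ).re) / 2) : ℂ) * Complex.I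
      = (√t : ℂ) - (√(-t) : ℂ) * Complex.I := by
    rw [Complex.norm_real, Real.norm_eq_abs, Complex.ofReal_re]
    rcases le_total 0 t with ht | ht
    · simp [abs_of_nonneg ht, Real.sqrt_eq_zero_of_nonpos (neg_nonpos.mpr ht)]
    · have hhalf : (-t - t) / 2 = -t := by ring
      simp [abs_of_nonpos ht, Real.sqrt_eq_zero_of_nonpos ht, hhalf]
  rw [← hvalue]
  refine ((hcont.tendsto _).mono_left nhdsWithin_le_nhds).congr' ?_
  filter_upwards [self_mem_nhdsWithin] with z hz
  exact (sqrt_eq_of_im_neg hz).symm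

section Network

variable {m : ℕ} {a c : Fin (m + 2) → ℝ} {lam : ℝ} {j k : Fin (m + 2)}

theorem xiR_eq_sqrt_sub_sqrt_neg (hck : 0 < c k) :
    xiR a c lam k
      = (√((lam - a k) / c k) : ℂ) - (√(-((lam - a k) / c k)) : ℂ) * Complex.I := by
  unfold xiR
  split_ifs with h
  · have hquot : -((lam - a k) / c k) ≤ 0 :=
      neg_nonpos.mpr (div_nonneg (sub_nonneg.mpr h) hck.le)
    simp [Real.sqrt_eq_zero_of_nonpos hquot]
  · have hquot : (lam - a k) / c k ≤ 0 :=
      div_nonpos_of_nonpos_of_nonneg (sub_nonpos.mpr (not_le.mp h).le) hck.le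
    rw [Real.sqrt_eq_zero_of_nonpos hquot, ← neg_div, neg_sub]
    push_cast
    ring

theorem re_xiR_sub_im_xiR (a c : Fin (m + 2) → ℝ) (lam : ℝ) (k : Fin (m + 2)) :
    (xiR a c lam k).re - (xiR a c lam k).im = √(|lam - a k| / c k) := by
  unfold xiR
  split_ifs with h
  · simp [abs_of_nonneg (sub_nonneg.mpr h)]
  · simp [abs_of_neg (sub_neg.mpr (not_le.mp h))]

theorem re_xiR_sub_im_xiR_pos (hck : 0 < c k) (hlam : lam ≠ a k) :
    0 < (xiR a c lam k).re - (xiR a c lam k).im := by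
  rw [re_xiR_sub_im_xiR]
  exact Real.sqrt_pos.mpr (div_pos (abs_pos.mpr (sub_ne_zero.mpr hlam)) hck)

theorem xiR_ne_zero (hck : 0 < c k) (hlam : lam ≠ a k) : xiR a c lam k ≠ 0 := by
  intro hzero
  simpa [hzero] using re_xiR_sub_im_xiR_pos hck hlam

theorem wR_ne_zero (hc : ∀ i, 0 < c i) (hlam : ∃ i, lam ≠ a i) : wR a c lam ≠ 0 := by
  obtain ⟨i, hi⟩ := hlam
  have hpos : 0 < ∑ l, c l * ((xiR a c lam l).re - (xiR a c lam l).im) := by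
    refine Finset.sum_pos' (fun l _ => ?_)
      ⟨i, Finset.mem_univ i, mul_pos (hc i) (re_xiR_sub_im_xiR_pos (hc i) hi)⟩
    rw [re_xiR_sub_im_xiR]
    exact mul_nonneg (hc l).le (Real.sqrt_nonneg _)
  have hsum : (∑ l, (c l : ℂ) * xiR a c lam l) ≠ 0 := by
    intro hzero
    have hre := congrArg Complex.re hzero
    have him := congrArg Complex.im hzero
    simp only [Complex.re_sum, Complex.im_sum, Complex.re_ofReal_mul, Complex.im_ofReal_mul,
      Complex.zero_re, Complex.zero_im] at hre him
    simp [mul_sub, hre, him] at hpos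
  exact mul_ne_zero (neg_ne_zero.mpr Complex.I_ne_zero) hsum

theorem tendsto_xiC (hck : 0 < c k) :
    Tendsto (fun μ => xiC a c μ k) (nhdsBelow lam) (𝓝 (xiR a c lam k)) := by
  rw [xiR_eq_sqrt_sub_sqrt_neg hck]
  simpa only [xiC, Complex.sqrt, one_div, Function.comp_def] using
    (tendsto_sqrt_nhdsBelow _).comp (tendsto_sub_div_nhdsBelow lam (a k) hck)

theorem tendsto_wC (hc : ∀ i, 0 < c i) :
    Tendsto (wC a c) (nhdsBelow lam) (𝓝 (wR a c lam)) :=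
  (tendsto_finsetSum _ fun l _ => (tendsto_xiC (hc l)).const_mul _).const_mul _

theorem tendsto_sC (hc : ∀ i, 0 < c i) (hlam : lam ≠ a j) :
    Tendsto (fun μ => sC a c μ j) (nhdsBelow lam) (𝓝 (sR a c lam j)) := by
  have hden : (c j : ℂ) * xiR a c lam j ≠ 0 :=
    mul_ne_zero (Complex.ofReal_ne_zero.mpr (hc j).ne') (xiR_ne_zero (hc j) hlam)
  exact (tendsto_finsetSum _ fun l _ => (tendsto_xiC (hc l)).const_mul _).neg.div
    ((tendsto_xiC (hc j)).const_mul _) hden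

theorem tendsto_FC_self (hc : ∀ i, 0 < c i) (hlam : lam ≠ a j) (x : ℝ) :
    Tendsto (fun μ => FC a c μ j j x) (nhdsBelow lam) (𝓝 (FR a c lam j j x)) := by
  have hphase : Tendsto (fun μ => xiC a c μ j * x) (nhdsBelow lam) (𝓝 (xiR a c lam j * x)) :=
    (tendsto_xiC (hc j)).mul_const _
  simp only [FC, FR, if_true]
  exact ((Complex.continuous_cos.tendsto _).comp hphase).sub
    (((tendsto_sC hc hlam).const_mul _).mul ((Complex.continuous_sin.tendsto _).comp hphase))

theorem tendsto_FC_of_ne (hck : 0 < c k) (hkj : k ≠ j) (x : ℝ) :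
    Tendsto (fun μ => FC a c μ j k x) (nhdsBelow lam) (𝓝 (FR a c lam j k x)) := by
  simp only [FC, FR, if_neg hkj]
  exact (((tendsto_xiC hck).const_mul _).mul_const _).cexp

theorem tendsto_FC (hc : ∀ i, 0 < c i) (hdiag : k = j → lam ≠ a j) (x : ℝ) :
    Tendsto (fun μ => FC a c μ j k x) (nhdsBelow lam) (𝓝 (FR a c lam j k x)) := by
  rcases eq_or_ne k j with rfl | hkj
  · exact tendsto_FC_self hc (hdiag rfl) x
  · exact tendsto_FC_of_ne (hc k) hkj x

theorem statement9_general (hc : ∀ i, 0 < c i) (hlam : ∃ i, lam ≠ a i)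
    (hdiag : k = j → lam ≠ a j) (x x' : ℝ) :
    Tendsto (fun μ => KC a c μ j x k x') (nhdsBelow lam) (𝓝 (KR a c lam j x k x')) := by
  have hw : Tendsto (fun μ => 1 / wC a c μ) (nhdsBelow lam) (𝓝 (1 / wR a c lam)) :=
    tendsto_const_nhds.div (tendsto_wC hc) (wR_ne_zero hc hlam)
  have hnext (y : ℝ) :
      Tendsto (fun μ => FC a c μ (j + 1) j y) (nhdsBelow lam) (𝓝 (FR a c lam (j + 1) j y)) :=
    tendsto_FC_of_ne (hc j) (by simp) y
  unfold KC KR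
  split_ifs with h
  · exact (hw.mul (tendsto_FC_self hc (hdiag h.1) x)).mul (hnext x')
  · exact (hw.mul (hnext x)).mul (tendsto_FC hc hdiag x')

end Network

/-- STATEMENT 9 (Theorem 4.3 i), limiting absorption principle, convergence of the kernel):
for real `λ ≥ a_1` with `λ ∉ {a_1,…,a_n}` and all network points `(j,x)`, `(k,x')`,
`K((j,x),(k,x'),λ−iα) → K((j,x),(k,x'),λ)` as `α → 0⁺`. -/
theorem statement9 (m : ℕ) (a c : Fin (m + 2) → ℝ) (ha : Monotone a) (hc : ∀ k, 0 < c k)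
    (lam : ℝ) (hlam1 : a 0 ≤ lam) (hlam : ∀ k, lam ≠ a k)
    (j k : Fin (m + 2)) (x x' : ℝ) (hx : 0 ≤ x) (hx' : 0 ≤ x') :
    Filter.Tendsto (fun α : ℝ => KC a c ((lam : ℂ) - (α : ℂ) * Complex.I) j x k x')
      (nhdsWithin 0 (Set.Ioi 0)) (nhds (KR a c lam j x k x')) :=
  (statement9_general hc ⟨j, hlam j⟩ (fun _ => hlam j) x x').comp (tendsto_sub_mul_I_nhdsBelow lam)
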